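/- Fix q, t ∈ (0,1), set λ_m = (1 - q^{2m})/(1 - t·q^{2m}), and let T be the bounded operator on ℓ²(ℕ, ℂ) with T δ_m = √(λ_{m+1}) · δ_{m+1}. Then T satisfies the two-parameter quantum disc relation T*T = q² · T T* + (1 - q²) · I + (t·(1 - q²)/(1 - t)) · (I - T T*) · (I - T*T), as an identity of bounded operators on ℓ²(ℕ, ℂ). -/

import Mathlib

/-- `ℓ²(ℕ, ℂ)`. -/
noncomputable abbrev QDisc.H : Type := lp (fun _ : ℕ => ℂ) 2

/-- The standard orthonormal basis vector `δ_m` of `ℓ²(ℕ, ℂ)`. -/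
noncomputable def QDisc.δ (m : ℕ) : QDisc.H := lp.single 2 m (1 : ℂ)

/-!
`T*T` and `TT*` are both diagonal in the basis shifted by `T`, with eigenvalues `λ_{m+1}` and `λ_m`
on the `m`-th basis vector; the value `λ_0 = 0` accounts for `T*` annihilating the first one. The
operator relation is therefore a recurrence between consecutive `λ_m`, and that recurrence comes
from `1 - λ_m = (1 - t) q^{2m} / (1 - t q^{2m})`.
-/

namespace QDisc

section HilbertBasis

variable {ι 𝕜 E F : Type*} [RCLike 𝕜] [NormedAddCommGroup E] [InnerProductSpace 𝕜 E]

lemma ext_inner_hilbertBasis (b : HilbertBasis ι 𝕜 E) {x y : E}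
    (h : ∀ i, inner 𝕜 (b i) x = inner 𝕜 (b i) y) : x = y := by
  refine b.repr.injective (lp.ext (funext fun i => ?_))
  rw [b.repr_apply_apply, b.repr_apply_apply, h]

lemma clm_ext_hilbertBasis [AddCommMonoid F] [Module 𝕜 F] [TopologicalSpace F] [T2Space F]
    (b : HilbertBasis ι 𝕜 E) {A B : E →L[𝕜] F} (h : ∀ i, A (b i) = B (b i)) : A = B :=
  ContinuousLinearMap.ext_on (Submodule.dense_iff_topologicalClosure_eq_top.2 b.dense_span)
    (Set.eqOn_range.2 (funext h))

end HilbertBasis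

/-- The standard basis of `ℓ²(ℕ, ℂ)`, as a Hilbert basis. -/
noncomputable def stdBasis : HilbertBasis ℕ ℂ H := .ofRepr (.refl ℂ H)

lemma coe_stdBasis : ⇑stdBasis = δ :=
  funext fun m => (stdBasis.repr_symm_single m).symm

section WeightedShift

open ContinuousLinearMap (adjoint adjoint_inner_right)
open scoped ComplexConjugate

variable {𝕜 E : Type*} [RCLike 𝕜] [NormedAddCommGroup E] [InnerProductSpace 𝕜 E]

/-- `T` is the (unilateral, forward) weighted shift with weights `w` along the basis `b`. -/
def IsWeightedShift (b : HilbertBasis ℕ 𝕜 E) (w : ℕ → 𝕜) (T : E →L[𝕜] E) : Prop :=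
  ∀ m, T (b m) = w m • b (m + 1)

lemma isWeightedShift_stdBasis_iff {w : ℕ → ℂ} {T : H →L[ℂ] H} :
    IsWeightedShift stdBasis w T ↔ ∀ m, T (δ m) = w m • δ (m + 1) := by
  rw [IsWeightedShift, coe_stdBasis]

namespace IsWeightedShift

variable [CompleteSpace E] {b : HilbertBasis ℕ 𝕜 E} {w : ℕ → 𝕜} {T : E →L[𝕜] E} {lam : ℕ → ℝ}

lemma adjoint_apply_zero (hT : IsWeightedShift b w T) : adjoint T (b 0) = 0 := by
  refine ext_inner_hilbertBasis b fun n => ?_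
  rw [adjoint_inner_right, hT n, inner_smul_left,
    b.orthonormal.inner_eq_zero n.succ_ne_zero, mul_zero, inner_zero_right]

lemma adjoint_apply_succ (hT : IsWeightedShift b w T) (m : ℕ) :
    adjoint T (b (m + 1)) = conj (w m) • b m := by
  refine ext_inner_hilbertBasis b fun n => ?_
  rw [adjoint_inner_right, hT n, inner_smul_left, inner_smul_right]
  simp only [orthonormal_iff_ite.1 b.orthonormal, Nat.add_right_cancel_iff]
  split_ifs with hnm
  · rw [hnm]
  · rw [mul_zero, mul_zero]

lemma adjoint_apply_apply (hT : IsWeightedShift b w T) (hw : ∀ m, ‖w m‖ ^ 2 = lam (m + 1))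
    (m : ℕ) : adjoint T (T (b m)) = (lam (m + 1) : 𝕜) • b m := by
  rw [hT m, map_smul, hT.adjoint_apply_succ, smul_smul, RCLike.mul_conj, ← hw, RCLike.ofReal_pow]

lemma apply_adjoint_apply (hT : IsWeightedShift b w T) (hw : ∀ m, ‖w m‖ ^ 2 = lam (m + 1))
    (h0 : lam 0 = 0) (m : ℕ) : T (adjoint T (b m)) = (lam m : 𝕜) • b m := by
  cases m with
  | zero => rw [hT.adjoint_apply_zero, map_zero, h0, RCLike.ofReal_zero, zero_smul]
  | succ m =>
    rw [hT.adjoint_apply_succ, map_smul, hT m, smul_smul, RCLike.conj_mul, ← hw,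
      RCLike.ofReal_pow]

theorem adjoint_mul_self_eq_of_recurrence (hT : IsWeightedShift b w T)
    (hw : ∀ m, ‖w m‖ ^ 2 = lam (m + 1)) (h0 : lam 0 = 0) {α β γ : ℝ}
    (hrec : ∀ m, lam (m + 1) =
      α * lam m + β + γ * ((1 - lam m) * (1 - lam (m + 1)))) :
    adjoint T * T = (α : 𝕜) • (T * adjoint T) + (β : 𝕜) • (1 : E →L[𝕜] E) +
      (γ : 𝕜) • ((1 - T * adjoint T) * (1 - adjoint T * T)) := by
  refine clm_ext_hilbertBasis b fun m => ?_
  have hrec_cast : (lam (m + 1) : 𝕜) =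
      α * lam m + β + γ * ((1 - lam m) * (1 - lam (m + 1))) := by
    exact_mod_cast congrArg (RCLike.ofReal (K := 𝕜)) (hrec m)
  simp only [add_apply, smul_apply, sub_apply, mul_apply_eq_comp, one_apply_eq_self, map_sub,
    map_smul, hT.adjoint_apply_apply hw, hT.apply_adjoint_apply hw h0]
  refine (congrArg (· • b m) hrec_cast).trans ?_
  module

end IsWeightedShift

end WeightedShift

section DiscWeight

variable {K : Type*} [Field K] {q t : K}

/-- The squared weight `λ_m` of the two-parameter quantum disc, the quotient
`‖e_m‖² / ‖e_{m-1}‖²` of basis norms for `m ≥ 1`. -/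
def discWeightSq (q t : K) (m : ℕ) : K :=
  (1 - q ^ (2 * m)) / (1 - t * q ^ (2 * m))

lemma discWeightSq_zero (q t : K) : discWeightSq q t 0 = 0 := by
  simp [discWeightSq]

lemma one_sub_discWeightSq {m : ℕ} (hm : 1 - t * q ^ (2 * m) ≠ 0) :
    1 - discWeightSq q t m = (1 - t) * q ^ (2 * m) / (1 - t * q ^ (2 * m)) := by
  rw [discWeightSq, one_sub_div hm]
  ring

lemma discWeightSq_succ {m : ℕ} (ht : 1 - t ≠ 0) (hm : 1 - t * q ^ (2 * m) ≠ 0)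
    (hm_succ : 1 - t * q ^ (2 * (m + 1)) ≠ 0) :
    discWeightSq q t (m + 1) = q ^ 2 * discWeightSq q t m + (1 - q ^ 2) +
      t * (1 - q ^ 2) / (1 - t) *
        ((1 - discWeightSq q t m) * (1 - discWeightSq q t (m + 1))) := by
  suffices hdiff : q ^ 2 * (1 - discWeightSq q t m) - (1 - discWeightSq q t (m + 1)) =
      t * (1 - q ^ 2) / (1 - t) *
        ((1 - discWeightSq q t m) * (1 - discWeightSq q t (m + 1))) by
    linear_combination hdiff
  rw [one_sub_discWeightSq hm, one_sub_discWeightSq hm_succ]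
  have hpow : q ^ (2 * (m + 1)) = q ^ 2 * q ^ (2 * m) := by ring
  rw [hpow] at hm_succ ⊢
  -- `field_simp` would otherwise reorder the denominators and miss `hm` and `hm_succ`.
  generalize hd : 1 - t * q ^ (2 * m) = d at hm ⊢
  generalize he : 1 - t * (q ^ 2 * q ^ (2 * m)) = e at hm_succ ⊢
  field_simp
  rw [← hd, ← he]
  ring

variable [LinearOrder K] [IsStrictOrderedRing K]

lemma pow_two_mul_le_one (hq : |q| ≤ 1) (m : ℕ) : q ^ (2 * m) ≤ 1 := by
  rw [← (even_two_mul m).pow_abs]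
  exact pow_le_one₀ (abs_nonneg q) hq

lemma one_sub_mul_pow_pos (hq : |q| ≤ 1) (ht : t < 1) (m : ℕ) :
    0 < 1 - t * q ^ (2 * m) := by
  have hpow_nonneg : 0 ≤ q ^ (2 * m) := (even_two_mul m).pow_nonneg q
  obtain ht_nonpos | ht_nonneg := le_total t 0
  · linarith [mul_nonpos_of_nonpos_of_nonneg ht_nonpos hpow_nonneg]
  · linarith [mul_le_of_le_one_right ht_nonneg (pow_two_mul_le_one hq m)]

lemma discWeightSq_nonneg (hq : |q| ≤ 1) (ht : t < 1) (m : ℕ) : 0 ≤ discWeightSq q t m :=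
  div_nonneg (sub_nonneg.2 (pow_two_mul_le_one hq m)) (one_sub_mul_pow_pos hq ht m).le

end DiscWeight

lemma norm_ofReal_sqrt_sq {𝕜 : Type*} [RCLike 𝕜] {x : ℝ} (hx : 0 ≤ x) :
    ‖((√x : ℝ) : 𝕜)‖ ^ 2 = x := by
  rw [RCLike.norm_ofReal, sq_abs, Real.sq_sqrt hx]

end QDisc

open QDisc in
theorem quantum_disc_shift_relation_general {𝕜 E : Type*} [RCLike 𝕜] [NormedAddCommGroup E]
    [InnerProductSpace 𝕜 E] [CompleteSpace E] (b : HilbertBasis ℕ 𝕜 E) {q t : ℝ}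
    (hden : ∀ m, 1 - t * q ^ (2 * m) ≠ 0) {w : ℕ → 𝕜}
    (hw : ∀ m, ‖w m‖ ^ 2 = discWeightSq q t (m + 1)) {T : E →L[𝕜] E}
    (hT : IsWeightedShift b w T) :
    ContinuousLinearMap.adjoint T * T =
      ((q ^ 2 : ℝ) : 𝕜) • (T * ContinuousLinearMap.adjoint T) +
        ((1 - q ^ 2 : ℝ) : 𝕜) • (1 : E →L[𝕜] E) +
        ((t * (1 - q ^ 2) / (1 - t) : ℝ) : 𝕜) •
          ((1 - T * ContinuousLinearMap.adjoint T) *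
            (1 - ContinuousLinearMap.adjoint T * T)) :=
  hT.adjoint_mul_self_eq_of_recurrence hw (discWeightSq_zero q t)
    fun m => discWeightSq_succ (by simpa using hden 0) (hden m) (hden (m + 1))

open QDisc in
/-- The quantum-disc weighted shift satisfies relation (3):
`T*T = q² T T* + (1-q²) I + (t(1-q²)/(1-t)) (I - T T*)(I - T*T)`. -/
theorem quantum_disc_shift_relation
    (q t : ℝ) (hq0 : 0 < q) (hq1 : q < 1) (ht0 : 0 < t) (ht1 : t < 1)
    (lam : ℕ → ℝ)
    (hlam : ∀ m : ℕ, lam m = (1 - q ^ (2 * m)) / (1 - t * q ^ (2 * m)))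
    (T : H →L[ℂ] H)
    (hT : ∀ m : ℕ, T (δ m) = (Real.sqrt (lam (m + 1)) : ℂ) • δ (m + 1)) :
    ContinuousLinearMap.adjoint T * T =
      ((q ^ 2 : ℝ) : ℂ) • (T * ContinuousLinearMap.adjoint T) +
        ((1 - q ^ 2 : ℝ) : ℂ) • (1 : H →L[ℂ] H) +
        ((t * (1 - q ^ 2) / (1 - t) : ℝ) : ℂ) •
          ((1 - T * ContinuousLinearMap.adjoint T) *
            (1 - ContinuousLinearMap.adjoint T * T)) := by
  obtain rfl : lam = discWeightSq q t := funext hlam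
  have hq : |q| ≤ 1 := (abs_of_pos hq0).trans_le hq1.le
  exact quantum_disc_shift_relation_general stdBasis
    (fun m => (one_sub_mul_pow_pos hq ht1 m).ne')
    (fun m => norm_ofReal_sqrt_sq (discWeightSq_nonneg hq ht1 (m + 1)))
    (isWeightedShift_stdBasis_iff.2 hT)
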